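/- Let δ < 2 be a real number and let a, b be positive functions of a real parameter ε > 0 such that a(ε) → 0 and b(ε) → 0 as ε → 0, and |a(ε) − b(ε)| = O(min(a(ε),b(ε))²) as ε → 0. Then for every x > 0, lim_{ε→0} ( ∫_{-∞}^{-a(ε)} e^t/t^δ dt + ∫_{b(ε)}^{x} e^t/t^δ dt ) = Ei^{(δ)}(x), where t^δ means -|t|^δ for negative t. -/

import Mathlib

/-!
Reflecting `t ↦ -t` on the negative axis, the symmetric truncation at `c > 0` equals
`∫_c^x (e^t - e^{-t}) / t^δ dt - ∫_x^∞ e^{-t} / t^δ dt` (`symm_truncation_eq`). Since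
`(e^t - e^{-t}) / t` extends continuously to `0` and `t^{1-δ}` is integrable at `0` for `δ < 2`,
the first integrand is integrable on `[0, x]`, so the truncations converge and `Ei δ x` is a
genuine limit (`tendsto_symm_truncation`).

The asymmetric truncation differs from the symmetric one at `a` by `∫_b^a e^t / t^δ dt`. With
`m = min a b` and `D = max δ 0 < 2`, the integrand is at most `e · m^{-D}` once `a, b ≤ 1`, while
the interval has length `O(m²)`; the difference is thus `O(m^{2-D})` and vanishes in the limit
(`tendsto_integral_gap`).
-/

open MeasureTheory Filter Topology Asymptotics

/-- The `δ`-exponential integral `Ei^{(δ)}(x)`, defined for `x > 0` (and `δ < 2`) as the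
principal value `lim_{ε→0⁺} (∫_{-∞}^{-ε} e^t/t^δ dt + ∫_ε^x e^t/t^δ dt)`, where `t^δ` means
`-|t|^δ` for negative `t`. -/
noncomputable def Ei (δ x : ℝ) : ℝ :=
  limUnder (𝓝[>] (0:ℝ)) (fun ε =>
    (∫ t in Set.Iic (-ε), Real.exp t / (-(|t| ^ δ))) + ∫ t in ε..x, Real.exp t / t ^ δ)

lemma intervalIntegrable_exp_div_rpow (δ s : ℝ) {c d : ℝ} (hc : 0 < c) (hd : 0 < d) :
    IntervalIntegrable (fun t => Real.exp (s * t) / t ^ δ) volume c d := by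
  apply ContinuousOn.intervalIntegrable
  have hpos : ∀ t ∈ Set.uIcc c d, 0 < t := fun t ht => lt_of_lt_of_le (lt_min hc hd) ht.1
  apply ContinuousOn.div (by fun_prop)
  · exact fun t ht => (Real.continuousAt_rpow_const _ _ (Or.inl (hpos t ht).ne')).continuousWithinAt
  · exact fun t ht => (Real.rpow_pos_of_pos (hpos t ht) _).ne'

lemma integrableOn_exp_neg_div_rpow (δ : ℝ) {c : ℝ} (hc : 0 < c) :
    IntegrableOn (fun t => Real.exp (-t) / t ^ δ) (Set.Ioi c) := by
  apply integrable_of_isBigO_exp_neg (b := 1 / 2) (by norm_num)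
  · intro t ht
    have h0 : 0 < t := lt_of_lt_of_le hc ht
    apply ContinuousAt.continuousWithinAt
    apply ContinuousAt.div (by fun_prop) (Real.continuousAt_rpow_const _ _ (Or.inl h0.ne'))
    exact (Real.rpow_pos_of_pos h0 _).ne'
  · have hlim := tendsto_rpow_mul_exp_neg_mul_atTop_nhds_zero (-δ) (1 / 2) (by norm_num)
    -- `e^{-t} t^{-δ} = (t^{-δ} e^{-t/2}) e^{-t/2}`, and the bracket tends to `0`
    have h2 := (hlim.isBigO_one ℝ).mul (isBigO_refl (fun t : ℝ => Real.exp (-(1 / 2) * t)) atTop)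
    refine (h2.congr' ?_ (by simp))
    filter_upwards [eventually_gt_atTop 0] with t ht
    rw [Real.rpow_neg ht.le, mul_assoc, ← Real.exp_add, div_eq_mul_inv, mul_comm]
    ring_nf

lemma symm_truncation_eq (δ : ℝ) {x c : ℝ} (hx : 0 < x) (hc : 0 < c) :
    (∫ t in Set.Iic (-c), Real.exp t / (-(|t| ^ δ))) + ∫ t in c..x, Real.exp t / t ^ δ
      = (∫ t in c..x, (Real.exp t - Real.exp (-t)) / t ^ δ)
        - ∫ t in Set.Ioi x, Real.exp (-t) / t ^ δ := by
  have h1 : (∫ t in Set.Iic (-c), Real.exp t / (-(|t| ^ δ)))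
      = - ∫ t in Set.Ioi c, Real.exp (-t) / t ^ δ := by
    have h := integral_comp_neg_Ioi c (fun t => Real.exp t / (-(|t| ^ δ)))
    rw [← h, ← integral_neg]
    refine setIntegral_congr_fun measurableSet_Ioi fun t ht => ?_
    have h0 : 0 < t := hc.trans ht
    simp only [abs_neg, abs_of_pos h0, div_neg]
  have h2 := intervalIntegral.integral_interval_add_Ioi
    (integrableOn_exp_neg_div_rpow δ hc) (integrableOn_exp_neg_div_rpow δ hx)
  have i1 := intervalIntegrable_exp_div_rpow δ 1 hc hx
  have i2 := intervalIntegrable_exp_div_rpow δ (-1) hc hx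
  simp only [one_mul, neg_mul] at i1 i2
  have h3 := intervalIntegral.integral_sub i1 i2
  simp only [← sub_div] at h3
  rw [h1, h3, ← h2]
  ring

lemma intervalIntegrable_sinh_div_rpow {δ : ℝ} (hδ : δ < 2) {x : ℝ} (hx : 0 < x) :
    IntervalIntegrable (fun t => (Real.exp t - Real.exp (-t)) / t ^ δ) volume 0 x := by
  set f : ℝ → ℝ := fun t => Real.exp t - Real.exp (-t) with hf
  have hd : Differentiable ℝ f := by fun_prop
  -- `dslope f 0` is the continuous extension of `(e^t - e^{-t}) / t` to `t = 0`
  have hcont : Continuous (dslope f 0) := by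
    rw [continuous_iff_continuousAt]
    intro t
    by_cases ht : t = 0
    · subst ht; exact continuousAt_dslope_same.2 (hd 0)
    · exact (continuousAt_dslope_of_ne ht).2 (hd t).continuousAt
  have hi : IntervalIntegrable (fun t : ℝ => t ^ (1 - δ)) volume 0 x :=
    intervalIntegral.intervalIntegrable_rpow' (by linarith)
  refine (hi.mul_continuousOn hcont.continuousOn).congr fun t ht => ?_
  rw [Set.uIoc_of_le hx.le] at ht
  have h0 : 0 < t := ht.1
  have hr : 0 < t ^ δ := Real.rpow_pos_of_pos h0 _
  simp only [dslope_of_ne f h0.ne', slope_def_field, Real.rpow_sub h0, Real.rpow_one]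
  simp only [hf, neg_zero, sub_self, sub_zero]
  field_simp

lemma tendsto_symm_truncation {δ : ℝ} (hδ : δ < 2) {x : ℝ} (hx : 0 < x) :
    Tendsto (fun c => (∫ t in Set.Iic (-c), Real.exp t / (-(|t| ^ δ)))
      + ∫ t in c..x, Real.exp t / t ^ δ) (𝓝[>] 0) (𝓝 (Ei δ x)) := by
  apply tendsto_nhds_limUnder
  refine ⟨(∫ t in (0:ℝ)..x, (Real.exp t - Real.exp (-t)) / t ^ δ)
        - ∫ t in Set.Ioi x, Real.exp (-t) / t ^ δ, ?_⟩
  have hc : Tendsto (fun c => ∫ t in c..x, (Real.exp t - Real.exp (-t)) / t ^ δ) (𝓝[>] 0)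
      (𝓝 (∫ t in (0:ℝ)..x, (Real.exp t - Real.exp (-t)) / t ^ δ)) := by
    have h := intervalIntegral.continuousOn_primitive_interval_left
      ((intervalIntegrable_iff').1 (intervalIntegrable_sinh_div_rpow hδ hx))
    have h0 := h 0 Set.left_mem_uIcc
    rw [Set.uIcc_of_le hx.le] at h0
    refine h0.mono_left ?_
    rw [← nhdsWithin_Ioc_eq_nhdsGT hx]
    exact nhdsWithin_mono _ Set.Ioc_subset_Icc_self
  refine (hc.sub_const _).congr' ?_
  filter_upwards [self_mem_nhdsWithin] with c hc
  exact (symm_truncation_eq δ hx hc).symm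

lemma tendsto_integral_gap {δ : ℝ} (hδ : δ < 2) {a b : ℝ → ℝ}
    (hapos : ∀ ε : ℝ, 0 < ε → 0 < a ε) (hbpos : ∀ ε : ℝ, 0 < ε → 0 < b ε)
    (ha : Tendsto a (𝓝[>] 0) (𝓝 0)) (hb : Tendsto b (𝓝[>] 0) (𝓝 0))
    (hab : (fun ε => |a ε - b ε|) =O[𝓝[>] 0] fun ε => min (a ε) (b ε) ^ 2) :
    Tendsto (fun ε => ∫ t in (b ε)..(a ε), Real.exp t / t ^ δ) (𝓝[>] 0) (𝓝 0) := by
  obtain ⟨C, hC⟩ := hab.bound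
  set D : ℝ := max δ 0
  have hD : 0 < 2 - D := by have : D < 2 := max_lt hδ two_pos; linarith
  have hm : Tendsto (fun ε => min (a ε) (b ε)) (𝓝[>] 0) (𝓝 0) := by simpa using ha.min hb
  have hlim : Tendsto (fun ε => Real.exp 1 * C * min (a ε) (b ε) ^ (2 - D)) (𝓝[>] 0) (𝓝 0) := by
    have := (hm.rpow_const (p := 2 - D) (Or.inr hD.le)).const_mul (Real.exp 1 * C)
    simpa [Real.zero_rpow hD.ne'] using this
  refine squeeze_zero_norm' ?_ hlim
  filter_upwards [hC, self_mem_nhdsWithin, ha.eventually_le_const one_pos,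
    hb.eventually_le_const one_pos] with ε hCε hε ha1 hb1
  have hmpos : 0 < min (a ε) (b ε) := lt_min (hapos ε hε) (hbpos ε hε)
  set m := min (a ε) (b ε)
  have key : ∀ t ∈ Set.uIoc (b ε) (a ε), ‖Real.exp t / t ^ δ‖ ≤ Real.exp 1 * m ^ (-D) := by
    intro t ht
    have hmt : m ≤ t := by
      have := ht.1.le
      rwa [min_comm] at this
    have ht1 : t ≤ 1 := ht.2.trans (max_le hb1 ha1)
    have h0 : 0 < t := hmpos.trans_le hmt
    rw [Real.norm_of_nonneg (by positivity), div_eq_mul_inv, ← Real.rpow_neg h0.le]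
    gcongr
    calc t ^ (-δ) ≤ t ^ (-D) :=
          Real.rpow_le_rpow_of_exponent_ge h0 ht1 (neg_le_neg (le_max_left _ _))
      _ ≤ m ^ (-D) :=
          Real.rpow_le_rpow_of_nonpos hmpos hmt (neg_nonpos.2 (le_max_right _ _))
  refine (intervalIntegral.norm_integral_le_of_norm_le_const key).trans ?_
  rw [Real.norm_of_nonneg (abs_nonneg _), Real.norm_of_nonneg (sq_nonneg _)] at hCε
  calc Real.exp 1 * m ^ (-D) * |a ε - b ε| ≤ Real.exp 1 * m ^ (-D) * (C * m ^ 2) := by gcongr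
    _ = Real.exp 1 * C * m ^ (2 - D) := by
      rw [sub_eq_add_neg, Real.rpow_add hmpos, Real.rpow_two]
      ring

/-- If `a, b` are positive functions of `ε > 0` tending to `0` with
`|a − b| = O(min(a,b)²)` as `ε → 0`, then for every `x > 0` the integrals
`∫_{-∞}^{-a(ε)} e^t/t^δ dt + ∫_{b(ε)}^x e^t/t^δ dt` converge to `Ei^{(δ)}(x)`. -/
theorem statement1 (δ : ℝ) (hδ : δ < 2) (a b : ℝ → ℝ)
    (hapos : ∀ ε : ℝ, 0 < ε → 0 < a ε) (hbpos : ∀ ε : ℝ, 0 < ε → 0 < b ε)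
    (ha : Tendsto a (𝓝[>] 0) (𝓝 0)) (hb : Tendsto b (𝓝[>] 0) (𝓝 0))
    (hab : (fun ε => |a ε - b ε|) =O[𝓝[>] 0] fun ε => min (a ε) (b ε) ^ 2)
    (x : ℝ) (hx : 0 < x) :
    Tendsto
      (fun ε =>
        (∫ t in Set.Iic (-(a ε)), Real.exp t / (-(|t| ^ δ))) +
          ∫ t in (b ε)..x, Real.exp t / t ^ δ)
      (𝓝[>] 0) (𝓝 (Ei δ x)) := by
  have ha' : Tendsto a (𝓝[>] 0) (𝓝[>] 0) := tendsto_nhdsWithin_iff.2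
    ⟨ha, by filter_upwards [self_mem_nhdsWithin] with ε hε using hapos ε hε⟩
  have h := ((tendsto_symm_truncation hδ hx).comp ha').add
    (tendsto_integral_gap hδ hapos hbpos ha hb hab)
  rw [add_zero] at h
  refine h.congr' ?_
  filter_upwards [self_mem_nhdsWithin] with ε hε
  have i1 := intervalIntegrable_exp_div_rpow δ 1 (hbpos ε hε) (hapos ε hε)
  have i2 := intervalIntegrable_exp_div_rpow δ 1 (hapos ε hε) hx
  simp only [one_mul] at i1 i2
  rw [← intervalIntegral.integral_add_adjacent_intervals i1 i2]
  simp only [Function.comp_apply]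
  ring
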